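/- arXiv:2110.03839 — 3 statements merged into one kernel-verified Lean document; each statement's English description precedes it below -/
import Mathlib

section
/- For every partition C of R there exist unique within-file partitions and a unique K-partite matching representing it; precisely, the map sending a partition C of R to the tuple (C_1, …, C_K, M), where C_k = {c ∩ R_k : c ∈ C, c ∩ R_k ≠ ∅} and M is the collection of blocks {c ∩ R_k : 1 ≤ k ≤ K, c ∩ R_k ≠ ∅} for c ∈ C, is a bijection from the set of all partitions of R onto the set of tuples (C_1, …, C_K, M) in which C_k is a partition of R_k for each k and M is a partition of C_1 ∪ … ∪ C_K each of whose blocks contains at most one element of each C_k. -/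
/-- A partition of a finite set `S`: a collection of nonempty pairwise disjoint
subsets (blocks) of `S` whose union is `S`. -/
def IsPartitionOf {β : Type*} [DecidableEq β] (S : Finset β) (C : Finset (Finset β)) : Prop :=
  (∀ c ∈ C, c.Nonempty) ∧
  (∀ c ∈ C, ∀ c' ∈ C, c ≠ c' → Disjoint c c') ∧
  C.biUnion id = S

/-!
The inverse map merges the blocks of `M`: a block `m` goes to the union of its members. Since
`⋃ k, C_k` partitions `R` and `M` partitions `⋃ k, C_k`, merging gives a partition of `R`. That it
inverts the decomposition rests on one observation: since `m` contains at most one element of each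
`C_k`, the trace of its union on `R_k` is that element if there is one, and empty otherwise.
-/

section PartitionBasics

open Finset

variable {β : Type*} [DecidableEq β] {S T c c' : Finset β} {C : Finset (Finset β)} {x : β}

theorem isPartitionOf_iff :
    IsPartitionOf S C ↔ (∀ c ∈ C, c.Nonempty) ∧
      (∀ c ∈ C, ∀ c' ∈ C, ∀ x ∈ c, x ∈ c' → c = c') ∧ ∀ x, x ∈ S ↔ ∃ c ∈ C, x ∈ c := by
  refine and_congr_right' (and_congr ?_ ?_)
  · refine forall₄_congr fun c _ c' _ => ?_
    rw [ne_eq, not_imp_comm, not_disjoint_iff]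
    simp only [forall_exists_index, and_imp]
  · simp only [Finset.ext_iff, mem_biUnion, id, iff_comm]

theorem IsPartitionOf.nonempty (h : IsPartitionOf S C) (hc : c ∈ C) : c.Nonempty :=
  h.1 c hc

theorem IsPartitionOf.eq_of_mem_of_mem (h : IsPartitionOf S C) (hc : c ∈ C) (hc' : c' ∈ C)
    (hx : x ∈ c) (hx' : x ∈ c') : c = c' :=
  (isPartitionOf_iff.1 h).2.1 c hc c' hc' x hx hx'

theorem IsPartitionOf.mem_iff (h : IsPartitionOf S C) : x ∈ S ↔ ∃ c ∈ C, x ∈ c :=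
  (isPartitionOf_iff.1 h).2.2 x

theorem IsPartitionOf.subset (h : IsPartitionOf S C) (hc : c ∈ C) : c ⊆ S :=
  fun _ hx => h.mem_iff.2 ⟨c, hc, hx⟩

/-- The nonempty traces `c ∩ T` of the members `c` of `C`; for `T = R_k` this is the within-file
partition `C_k`. -/
def traces (C : Finset (Finset β)) (T : Finset β) : Finset (Finset β) :=
  (C.image (fun c => c ∩ T)).filter (fun s => s ≠ ∅)

theorem mem_traces {s : Finset β} :
    s ∈ traces C T ↔ ∃ c ∈ C, c ∩ T = s ∧ s.Nonempty := by
  simp only [traces, mem_filter, mem_image, ← nonempty_iff_ne_empty, ← exists_and_right, and_assoc]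

theorem isPartitionOf_traces (h : IsPartitionOf S C) (hT : T ⊆ S) :
    IsPartitionOf T (traces C T) := by
  simp only [isPartitionOf_iff, mem_traces]
  refine ⟨?nonempty, ?unique, fun x => ⟨fun hx => ?_, ?_⟩⟩
  case nonempty =>
    rintro _ ⟨c, -, rfl, hne⟩
    exact hne
  case unique =>
    rintro _ ⟨c, hc, rfl, -⟩ _ ⟨c', hc', rfl, -⟩ x hx hx'
    rw [h.eq_of_mem_of_mem hc hc' (mem_of_mem_inter_left hx) (mem_of_mem_inter_left hx')]
  · obtain ⟨c, hc, hxc⟩ := h.mem_iff.1 (hT hx)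
    have hxcT : x ∈ c ∩ T := mem_inter.2 ⟨hxc, hx⟩
    exact ⟨c ∩ T, ⟨c, hc, rfl, x, hxcT⟩, hxcT⟩
  · rintro ⟨_, ⟨c, -, rfl, -⟩, hx⟩
    exact mem_of_mem_inter_right hx

/-- The family of unions of the members of `M`. When `M` partitions the blocks of a partition, this
is the coarser partition obtained by merging the blocks that `M` groups together. -/
def merge (M : Finset (Finset (Finset β))) : Finset (Finset β) :=
  M.image (fun m => m.biUnion id)

theorem isPartitionOf_merge {M : Finset (Finset (Finset β))} (hC : IsPartitionOf S C)
    (hM : IsPartitionOf C M) : IsPartitionOf S (merge M) := by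
  simp only [isPartitionOf_iff, merge, forall_mem_image, exists_mem_image, mem_biUnion, id]
  refine ⟨fun m hm => ?nonempty, ?unique, fun x => ⟨fun hx => ?_, ?_⟩⟩
  case nonempty =>
    exact (hM.nonempty hm).biUnion fun s hs => hC.nonempty (hM.subset hm hs)
  case unique =>
    rintro m hm m' hm' x ⟨s, hs, hxs⟩ ⟨s', hs', hxs'⟩
    obtain rfl : s = s' :=
      hC.eq_of_mem_of_mem (hM.subset hm hs) (hM.subset hm' hs') hxs hxs'
    rw [hM.eq_of_mem_of_mem hm hm' hs hs']
  · obtain ⟨s, hs, hxs⟩ := hC.mem_iff.1 hx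
    obtain ⟨m, hm, hsm⟩ := hM.mem_iff.1 hs
    exact ⟨m, hm, s, hsm, hxs⟩
  · rintro ⟨m, hm, s, hs, hxs⟩
    exact hC.subset (hM.subset hm hs) hxs

end PartitionBasics

section Multifile

open Finset Function

variable {α ι : Type*} [DecidableEq α] [Fintype ι] {R : ι → Finset α} {P : ι → Finset (Finset α)}
  {C : Finset (Finset α)} {M : Finset (Finset (Finset α))} {m : Finset (Finset α)} {c s : Finset α}
  {k : ι}

theorem isPartitionOf_biUnion (hR : Pairwise (Disjoint on R))
    (hP : ∀ k, IsPartitionOf (R k) (P k)) :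
    IsPartitionOf (univ.biUnion R) (univ.biUnion P) := by
  simp only [isPartitionOf_iff, mem_biUnion, mem_univ, true_and]
  refine ⟨?nonempty, ?unique, fun x => ?mem⟩
  case nonempty =>
    rintro s ⟨k, hs⟩
    exact (hP k).nonempty hs
  case unique =>
    rintro s ⟨k, hs⟩ s' ⟨k', hs'⟩ x hx hx'
    obtain rfl : k = k' :=
      hR.eq (not_disjoint_iff.2 ⟨x, (hP k).subset hs hx, (hP k').subset hs' hx'⟩)
    exact (hP k).eq_of_mem_of_mem hs hs' hx hx'
  case mem =>
    simp only [(hP _).mem_iff]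
    tauto

/-- The nonempty pieces `c ∩ R k` into which the datafiles cut a cluster `c`. -/
def pieces (R : ι → Finset α) (c : Finset α) : Finset (Finset α) :=
  (univ.image (fun k => c ∩ R k)).filter (fun s => s ≠ ∅)

theorem mem_pieces : s ∈ pieces R c ↔ ∃ k, c ∩ R k = s ∧ s.Nonempty := by
  simp only [pieces, mem_filter, mem_image, mem_univ, true_and, ← nonempty_iff_ne_empty,
    exists_and_right]

theorem biUnion_pieces (hc : c ⊆ univ.biUnion R) : (pieces R c).biUnion id = c := by
  refine Subset.antisymm (biUnion_subset.2 fun s hs => ?_) fun x hx => ?_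
  · obtain ⟨k, rfl, -⟩ := mem_pieces.1 hs
    exact inter_subset_left
  · obtain ⟨k, -, hk⟩ := mem_biUnion.1 (hc hx)
    have hxk : x ∈ c ∩ R k := mem_inter.2 ⟨hx, hk⟩
    exact mem_biUnion.2 ⟨c ∩ R k, mem_pieces.2 ⟨k, rfl, x, hxk⟩, hxk⟩

theorem merge_image_pieces (hC : ∀ c ∈ C, c ⊆ univ.biUnion R) :
    merge (C.image (pieces R)) = C := by
  rw [merge, image_image]
  exact (image_congr fun c hc => biUnion_pieces (hC c hc)).trans image_id

theorem isPartitionOf_image_pieces (hC : IsPartitionOf (univ.biUnion R) C) :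
    IsPartitionOf (univ.biUnion fun k => traces C (R k)) (C.image (pieces R)) := by
  simp only [isPartitionOf_iff, forall_mem_image, exists_mem_image]
  refine ⟨fun c hc => ?nonempty, fun c hc c' hc' s hs hs' => ?unique, fun s => ?mem⟩
  case nonempty =>
    have hne : ((pieces R c).biUnion id).Nonempty := by
      rw [biUnion_pieces (hC.subset hc)]
      exact hC.nonempty hc
    obtain ⟨s, hs, -⟩ := biUnion_nonempty.1 hne
    exact ⟨s, hs⟩
  case unique =>
    obtain ⟨k, hk, x, hx⟩ := mem_pieces.1 hs
    obtain ⟨k', hk', -⟩ := mem_pieces.1 hs'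
    have hxc : x ∈ c := mem_of_mem_inter_left (hk ▸ hx)
    have hxc' : x ∈ c' := mem_of_mem_inter_left (hk' ▸ hx)
    rw [hC.eq_of_mem_of_mem hc hc' hxc hxc']
  case mem =>
    simp only [mem_biUnion, mem_univ, true_and, mem_traces, mem_pieces]
    tauto

theorem pieces_inter_traces_subset (hR : Pairwise (Disjoint on R)) :
    pieces R c ∩ traces C (R k) ⊆ {c ∩ R k} := by
  intro s hs
  obtain ⟨hsc, hsk⟩ := mem_inter.1 hs
  obtain ⟨j, rfl, x, hx⟩ := mem_pieces.1 hsc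
  obtain ⟨c', -, hc', -⟩ := mem_traces.1 hsk
  have hxk : x ∈ R k := mem_of_mem_inter_right (hc' ▸ hx)
  obtain rfl : j = k := hR.eq (not_disjoint_iff.2 ⟨x, mem_of_mem_inter_right hx, hxk⟩)
  exact mem_singleton_self _

/-- A `K`-partite matching of the within-file clusters `P k`: a partition of all of them whose
blocks contain at most one cluster from each file. An unmatched cluster is a singleton block. -/
def IsPartiteMatching (P : ι → Finset (Finset α)) (M : Finset (Finset (Finset α))) : Prop :=
  IsPartitionOf (univ.biUnion P) M ∧ ∀ m ∈ M, ∀ k, (m ∩ P k).card ≤ 1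

theorem isPartiteMatching_image_pieces (hR : Pairwise (Disjoint on R))
    (hC : IsPartitionOf (univ.biUnion R) C) :
    IsPartiteMatching (fun k => traces C (R k)) (C.image (pieces R)) :=
  ⟨isPartitionOf_image_pieces hC, forall_mem_image.2 fun c _ k =>
    (card_le_card (pieces_inter_traces_subset hR)).trans (card_singleton (c ∩ R k)).le⟩

namespace IsPartiteMatching

theorem exists_mem (hM : IsPartiteMatching P M) (hm : m ∈ M) (hs : s ∈ m) : ∃ k, s ∈ P k := by
  simpa only [mem_biUnion, mem_univ, true_and] using hM.1.subset hm hs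

theorem exists_mem_of_mem_biUnion_inter (hM : IsPartiteMatching P M)
    (hR : Pairwise (Disjoint on R)) (hP : ∀ k, IsPartitionOf (R k) (P k)) (hm : m ∈ M) {x : α}
    (hx : x ∈ m.biUnion id ∩ R k) : ∃ s ∈ m, s ∈ P k ∧ x ∈ s := by
  obtain ⟨hxm, hxk⟩ := mem_inter.1 hx
  obtain ⟨s, hs, hxs⟩ := mem_biUnion.1 hxm
  obtain ⟨j, hsj⟩ := hM.exists_mem hm hs
  obtain rfl : j = k := hR.eq (not_disjoint_iff.2 ⟨x, (hP j).subset hsj hxs, hxk⟩)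
  exact ⟨s, hs, hsj, hxs⟩

theorem biUnion_inter_eq_of_mem (hM : IsPartiteMatching P M) (hR : Pairwise (Disjoint on R))
    (hP : ∀ k, IsPartitionOf (R k) (P k)) (hm : m ∈ M) (hs : s ∈ m) (hsk : s ∈ P k) :
    m.biUnion id ∩ R k = s := by
  refine Subset.antisymm (fun x hx => ?_)
    (subset_inter (subset_biUnion_of_mem id hs) ((hP k).subset hsk))
  obtain ⟨t, ht, htk, hxt⟩ := hM.exists_mem_of_mem_biUnion_inter hR hP hm hx
  have hts : t = s := card_le_one.1 (hM.2 m hm k) t (mem_inter.2 ⟨ht, htk⟩) s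
    (mem_inter.2 ⟨hs, hsk⟩)
  exact hts ▸ hxt

theorem biUnion_inter_eq_iff (hM : IsPartiteMatching P M) (hR : Pairwise (Disjoint on R))
    (hP : ∀ k, IsPartitionOf (R k) (P k)) (hm : m ∈ M) :
    m.biUnion id ∩ R k = s ∧ s.Nonempty ↔ s ∈ m ∧ s ∈ P k := by
  constructor
  · rintro ⟨rfl, x, hx⟩
    obtain ⟨t, ht, htk, -⟩ := hM.exists_mem_of_mem_biUnion_inter hR hP hm hx
    rw [hM.biUnion_inter_eq_of_mem hR hP hm ht htk]
    exact ⟨ht, htk⟩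
  · rintro ⟨hs, hsk⟩
    exact ⟨hM.biUnion_inter_eq_of_mem hR hP hm hs hsk, (hP k).nonempty hsk⟩

theorem traces_merge (hM : IsPartiteMatching P M) (hR : Pairwise (Disjoint on R))
    (hP : ∀ k, IsPartitionOf (R k) (P k)) (k : ι) : traces (merge M) (R k) = P k := by
  ext s
  rw [mem_traces, merge, exists_mem_image]
  constructor
  · rintro ⟨m, hm, h⟩
    exact ((hM.biUnion_inter_eq_iff hR hP hm).1 h).2
  · intro hs
    obtain ⟨m, hm, hsm⟩ := hM.1.mem_iff.1 (mem_biUnion.2 ⟨k, mem_univ k, hs⟩)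
    exact ⟨m, hm, (hM.biUnion_inter_eq_iff hR hP hm).2 ⟨hsm, hs⟩⟩

theorem pieces_biUnion (hM : IsPartiteMatching P M) (hR : Pairwise (Disjoint on R))
    (hP : ∀ k, IsPartitionOf (R k) (P k)) (hm : m ∈ M) : pieces R (m.biUnion id) = m := by
  ext s
  simp only [mem_pieces, hM.biUnion_inter_eq_iff hR hP hm, exists_and_left]
  exact and_iff_left_of_imp (hM.exists_mem hm)

theorem image_pieces_merge (hM : IsPartiteMatching P M) (hR : Pairwise (Disjoint on R))
    (hP : ∀ k, IsPartitionOf (R k) (P k)) : (merge M).image (pieces R) = M := by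
  rw [merge, image_image]
  exact (image_congr fun m hm => hM.pieces_biUnion hR hP hm).trans image_id

end IsPartiteMatching

theorem multifile_partition_bijection_general (hR : Pairwise (Disjoint on R)) :
    Set.BijOn (fun C => (fun k => traces C (R k), C.image (pieces R)))
      {C | IsPartitionOf (univ.biUnion R) C}
      {q | (∀ k, IsPartitionOf (R k) (q.1 k)) ∧ IsPartiteMatching q.1 q.2} := by
  refine Set.InvOn.bijOn (f' := fun q => merge q.2) ⟨?leftInv, ?rightInv⟩ ?mapsTo ?mapsToInv
  case leftInv => exact fun C hC => merge_image_pieces fun c hc => hC.subset hc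
  case rightInv =>
    rintro ⟨P, M⟩ ⟨hP, hM⟩
    exact Prod.ext (funext (hM.traces_merge hR hP)) (hM.image_pieces_merge hR hP)
  case mapsTo =>
    exact fun C hC => ⟨fun k => isPartitionOf_traces hC (subset_biUnion_of_mem R (mem_univ k)),
      isPartiteMatching_image_pieces hR hC⟩
  case mapsToInv =>
    rintro ⟨P, M⟩ ⟨hP, hM⟩
    exact isPartitionOf_merge (isPartitionOf_biUnion hR hP) hM.1

end Multifile

/-- The map sending a partition `C` of `R = R_1 ∪ ⋯ ∪ R_K` to the tuple
`(C_1, …, C_K, M)`, where `C_k = {c ∩ R_k : c ∈ C, c ∩ R_k ≠ ∅}` and `M` has blocks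
`{c ∩ R_k : 1 ≤ k ≤ K, c ∩ R_k ≠ ∅}` for `c ∈ C`, is a bijection from the set of all
partitions of `R` onto the set of tuples `(C_1, …, C_K, M)` in which each `C_k` is a
partition of `R_k` and `M` is a partition of `C_1 ∪ ⋯ ∪ C_K` each of whose blocks
contains at most one element of each `C_k`. -/
theorem multifile_partition_bijection {α : Type*} [DecidableEq α] {K : ℕ} (hK : 1 ≤ K)
    (R : Fin K → Finset α)
    (hdisj : ∀ k k' : Fin K, k ≠ k' → Disjoint (R k) (R k')) :
    Set.BijOn
      (fun C : Finset (Finset α) =>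
        ((fun k : Fin K => (C.image (fun c => c ∩ R k)).filter (fun s => s ≠ ∅)),
          C.image (fun c =>
            (Finset.univ.image (fun k : Fin K => c ∩ R k)).filter (fun s => s ≠ ∅))))
      {C : Finset (Finset α) | IsPartitionOf (Finset.univ.biUnion R) C}
      {q : (Fin K → Finset (Finset α)) × Finset (Finset (Finset α)) |
        (∀ k, IsPartitionOf (R k) (q.1 k)) ∧
        IsPartitionOf (Finset.univ.biUnion q.1) q.2 ∧
        (∀ m ∈ q.2, ∀ k, (m ∩ q.1 k).card ≤ 1)} :=
  multifile_partition_bijection_general fun _ _ => hdisj _ _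
end

section
/- (Proposition 1) Let n : H → ℕ be an overlap table and for each k set n_k = Σ_{h∈H} h_k n_h. Let V_1, …, V_K be pairwise disjoint finite sets with |V_k| = n_k for every k. Then the number of K-partite matchings of V_1, …, V_K whose overlap table equals n is (∏_{k=1}^{K} n_k!) / (∏_{h∈H} n_h!). -/
/-!
Double counting of matchings whose blocks carry labels. Fix a finite set of slots, `n h` of them for
each pattern `h`, and label the blocks of a matching bijectively by the slots of the same pattern.
A labelled matching amounts to choosing, for every part `V k`, a bijection from `V k` to the slots
whose pattern contains `k`: an element goes to the label of its block. So there are `∏ k, (#(V k))!`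
labelled matchings. On the other hand the labellings of a single matching form a torsor under the
permutations of the slots that preserve patterns, so each matching is counted `∏ h, (n h)!` times.
-/

open Finset
open scoped Nat

section Bijections

theorem image_univ_coe_equiv {σ β : Type*} [Fintype σ] [DecidableEq β] {t : Finset β} (e : σ ≃ t) :
    univ.image (fun s => (e s : β)) = t := by
  ext x
  simpa using e.exists_congr_left (p := fun s => (e s : β) = x)

variable {σ τ κ : Type*} [Fintype σ] [DecidableEq κ] {f : σ → κ}

theorem card_fiberPreserving_perm [Fintype κ] :
    Nat.card {π : Equiv.Perm σ // f ∘ π = f} = ∏ c, (#{s | f s = c})! := by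
  classical
  rw [Nat.card_eq_fintype_card, DomMulAct.stabilizer_card]
  simp only [Fintype.card_subtype]

theorem nonempty_fiberPreserving_equiv_perm [Fintype τ] {g : τ → κ}
    (hfg : ∀ c, #{s | f s = c} = #{t | g t = c}) :
    Nonempty ({e : σ ≃ τ // ∀ s, g (e s) = f s} ≃ {π : Equiv.Perm σ // f ∘ π = f}) := by
  have fiberEquiv (c : κ) : {s // f s = c} ≃ {t // g t = c} :=
    Fintype.equivOfCardEq (by simpa only [Fintype.card_subtype] using hfg c)
  let e₀ : σ ≃ τ := Equiv.ofFiberEquiv fiberEquiv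
  have he₀ (s : σ) : g (e₀ s) = f s := Equiv.ofFiberEquiv_map fiberEquiv s
  refine ⟨(Equiv.equivCongr (.refl σ) e₀.symm).subtypeEquiv fun e => ?_⟩
  simp [funext_iff, ← he₀]

end Bijections

section KPartite

variable {ι α σ : Type*} [DecidableEq α]

/-- The vector `h(m)` recording which of the parts `V k` the block `m` meets. -/
def inclusionPattern (V : ι → Finset α) (m : Finset α) : ι → Bool :=
  fun k => decide (m ∩ V k ≠ ∅)

variable {V : ι → Finset α} {M : Finset (Finset α)} {m m' : Finset α} {a : α} {k : ι}
  {p : σ → ι → Bool} {b : σ → Finset α}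

theorem inclusionPattern_eq_true_iff : inclusionPattern V m k = true ↔ ∃ a ∈ m, a ∈ V k := by
  simp [inclusionPattern, Finset.ext_iff]

variable [Fintype ι]

/-- The overlap table of `M`: the number of blocks of each inclusion pattern, here with an entry
for the zero pattern as well. -/
def overlapTable (V : ι → Finset α) (M : Finset (Finset α)) (h : ι → Bool) : ℕ :=
  #{m ∈ M | inclusionPattern V m = h}

/-- A `K`-partite matching of the parts `V k`, which are indexed by any finite type. -/
structure IsKPartiteMatching (V : ι → Finset α) (M : Finset (Finset α)) : Prop where
  isPartitionOf : IsPartitionOf (univ.biUnion V) M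
  card_inter_le_one : ∀ m ∈ M, ∀ k, #(m ∩ V k) ≤ 1

theorem isKPartiteMatching_iff : IsKPartiteMatching V M ↔
    IsPartitionOf (univ.biUnion V) M ∧ ∀ m ∈ M, ∀ k, #(m ∩ V k) ≤ 1 :=
  ⟨fun hM => ⟨hM.1, hM.2⟩, fun hM => ⟨hM.1, hM.2⟩⟩

namespace IsKPartiteMatching

theorem exists_mem_of_mem (hM : IsKPartiteMatching V M) (ha : a ∈ V k) : ∃ m ∈ M, a ∈ m := by
  have ha' : a ∈ M.biUnion id := hM.isPartitionOf.2.2 ▸ mem_biUnion.2 ⟨k, mem_univ k, ha⟩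
  simpa using ha'

theorem exists_part_of_mem (hM : IsKPartiteMatching V M) (hm : m ∈ M) (ha : a ∈ m) :
    ∃ k, a ∈ V k := by
  have ha' : a ∈ univ.biUnion V := hM.isPartitionOf.2.2 ▸ mem_biUnion.2 ⟨m, hm, ha⟩
  simpa using ha'

theorem eq_of_mem (hM : IsKPartiteMatching V M) (hm : m ∈ M) (hm' : m' ∈ M) (ha : a ∈ m)
    (ha' : a ∈ m') : m = m' := by
  by_contra hne
  exact disjoint_left.1 (hM.isPartitionOf.2.1 m hm m' hm' hne) ha ha'

theorem exists_inclusionPattern_eq_true (hM : IsKPartiteMatching V M) (hm : m ∈ M) :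
    ∃ k, inclusionPattern V m k = true := by
  obtain ⟨a, ha⟩ := hM.isPartitionOf.1 m hm
  obtain ⟨k, hk⟩ := hM.exists_part_of_mem hm ha
  exact ⟨k, inclusionPattern_eq_true_iff.2 ⟨a, ha, hk⟩⟩

theorem overlapTable_zero (hM : IsKPartiteMatching V M) :
    overlapTable V M (fun _ => false) = 0 := by
  refine card_eq_zero.2 (filter_eq_empty_iff.2 fun m hm hzero => ?_)
  obtain ⟨k, hk⟩ := hM.exists_inclusionPattern_eq_true hm
  simp [hzero] at hk

end IsKPartiteMatching

/-- A `K`-partite matching whose blocks are labelled bijectively by the slots `s : σ`, the block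
`b s` having the prescribed inclusion pattern `p s`. -/
structure IsLabelledMatching [Fintype σ] (p : σ → ι → Bool) (V : ι → Finset α)
    (b : σ → Finset α) : Prop where
  injective : Function.Injective b
  isKPartiteMatching : IsKPartiteMatching V (univ.image b)
  inclusionPattern_eq : ∀ s, inclusionPattern V (b s) = p s

section SlotBlock

variable [DecidableEq σ]

/-- The block of all elements to which `slot`, a choice of a slot for each element of the parts,
assigns the slot `s`. -/
def slotBlock (slot : ∀ k, V k ≃ {s // p s k = true}) (s : σ) : Finset α :=
  ({x | (slot x.1 x.2 : σ) = s} : Finset (Σ k, V k)).image fun x => (x.2 : α)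

variable {slot : ∀ k, V k ≃ {s // p s k = true}} {s s' : σ}

theorem mem_slotBlock : a ∈ slotBlock slot s ↔ ∃ k, ∃ ha : a ∈ V k, (slot k ⟨a, ha⟩ : σ) = s := by
  simp [slotBlock]

variable (hV : Pairwise (Function.onFun Disjoint V))
include hV

theorem mem_slotBlock_of_mem (ha : a ∈ V k) :
    a ∈ slotBlock slot s ↔ (slot k ⟨a, ha⟩ : σ) = s := by
  rw [mem_slotBlock]
  refine ⟨?_, fun h => ⟨k, ha, h⟩⟩
  rintro ⟨k', ha', h⟩
  obtain rfl : k' = k := hV.eq (not_disjoint_iff.2 ⟨a, ha', ha⟩)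
  exact h

theorem inclusionPattern_slotBlock : inclusionPattern V (slotBlock slot s) = p s := by
  funext k
  rw [Bool.eq_iff_iff, inclusionPattern_eq_true_iff]
  constructor
  · rintro ⟨a, has, hak⟩
    rw [mem_slotBlock_of_mem hV hak] at has
    exact has ▸ (slot k ⟨a, hak⟩).2
  · intro hs
    refine ⟨(slot k).symm ⟨s, hs⟩, ?_, ((slot k).symm ⟨s, hs⟩).2⟩
    simp [mem_slotBlock_of_mem hV ((slot k).symm ⟨s, hs⟩).2]

theorem disjoint_slotBlock (hne : s ≠ s') :
    Disjoint (slotBlock slot s) (slotBlock slot s') := by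
  refine disjoint_left.2 fun a ha ha' => hne ?_
  obtain ⟨k, hak, rfl⟩ := mem_slotBlock.1 ha
  exact (mem_slotBlock_of_mem hV hak).1 ha'

theorem card_slotBlock_inter_le_one : #(slotBlock slot s ∩ V k) ≤ 1 := by
  refine card_le_one.2 fun a ha a' ha' => ?_
  rw [mem_inter] at ha ha'
  have hslot : (slot k ⟨a, ha.2⟩ : σ) = slot k ⟨a', ha'.2⟩ :=
    ((mem_slotBlock_of_mem hV ha.2).1 ha.1).trans ((mem_slotBlock_of_mem hV ha'.2).1 ha'.1).symm
  exact congrArg Subtype.val ((slot k).injective (Subtype.ext hslot))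

theorem slotBlock_nonempty (hs : ∃ k, p s k = true) : (slotBlock slot s).Nonempty := by
  obtain ⟨k, hk⟩ := hs
  rw [← inclusionPattern_slotBlock (slot := slot) hV] at hk
  obtain ⟨a, ha, -⟩ := inclusionPattern_eq_true_iff.1 hk
  exact ⟨a, ha⟩

theorem slotBlock_injective :
    Function.Injective (slotBlock : (∀ k, V k ≃ {s // p s k = true}) → σ → Finset α) := by
  intro slot slot' h
  ext k a
  have ha : (a : α) ∈ slotBlock slot (slot k a) := (mem_slotBlock_of_mem hV a.2).2 rfl
  rw [h] at ha
  exact ((mem_slotBlock_of_mem hV a.2).1 ha).symm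

theorem isLabelledMatching_slotBlock [Fintype σ] (hp : ∀ s, ∃ k, p s k = true) :
    IsLabelledMatching p V (slotBlock slot) where
  injective s s' h := by
    by_contra hne
    have hdisj := disjoint_slotBlock (slot := slot) hV hne
    rw [h, disjoint_self] at hdisj
    exact (slotBlock_nonempty hV (hp s')).ne_empty hdisj
  isKPartiteMatching :=
    { isPartitionOf := by
        simp only [IsPartitionOf, mem_image, mem_univ, true_and, forall_exists_index,
          forall_apply_eq_imp_iff]
        refine ⟨fun s => slotBlock_nonempty hV (hp s),
          fun s s' hne => disjoint_slotBlock hV fun h => hne (h ▸ rfl), ?_⟩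
        ext a
        simp [mem_slotBlock]
      card_inter_le_one := by
        simp only [mem_image, mem_univ, true_and, forall_exists_index, forall_apply_eq_imp_iff]
        exact fun s k => card_slotBlock_inter_le_one hV }
  inclusionPattern_eq s := inclusionPattern_slotBlock hV

end SlotBlock

namespace IsLabelledMatching

variable [Fintype σ]

theorem exists_mem_of_mem (hb : IsLabelledMatching p V b) (ha : a ∈ V k) : ∃ s, a ∈ b s := by
  simpa using hb.isKPartiteMatching.exists_mem_of_mem ha

theorem eq_of_mem (hb : IsLabelledMatching p V b) {s s' : σ} (ha : a ∈ b s) (ha' : a ∈ b s') :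
    s = s' :=
  hb.injective (hb.isKPartiteMatching.eq_of_mem (mem_image_of_mem b (mem_univ s))
    (mem_image_of_mem b (mem_univ s')) ha ha')

theorem pattern_eq_true_iff (hb : IsLabelledMatching p V b) {s : σ} :
    p s k = true ↔ ∃ a ∈ b s, a ∈ V k := by
  rw [← hb.inclusionPattern_eq, inclusionPattern_eq_true_iff]

theorem eq_of_mem_of_mem_part (hb : IsLabelledMatching p V b) {s : σ} {a' : α} (has : a ∈ b s)
    (has' : a' ∈ b s) (hak : a ∈ V k) (hak' : a' ∈ V k) : a = a' :=
  card_le_one.1 (hb.isKPartiteMatching.card_inter_le_one _ (mem_image_of_mem b (mem_univ s)) k)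
    a (mem_inter.2 ⟨has, hak⟩) a' (mem_inter.2 ⟨has', hak'⟩)

theorem exists_slotBlock_eq [DecidableEq σ] (hb : IsLabelledMatching p V b) :
    ∃ slot : ∀ k, V k ≃ {s // p s k = true}, slotBlock slot = b := by
  choose label hlabel using fun k (a : V k) => hb.exists_mem_of_mem a.2
  let slot (k : ι) (a : V k) : {s // p s k = true} :=
    ⟨label k a, hb.pattern_eq_true_iff.2 ⟨a, hlabel k a, a.2⟩⟩
  have hslot (k : ι) : Function.Bijective (slot k) := by
    constructor
    · intro a a' h
      have hlabel_eq : label k a = label k a' := congrArg Subtype.val h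
      exact Subtype.ext
        (hb.eq_of_mem_of_mem_part (hlabel k a) (hlabel_eq ▸ hlabel k a') a.2 a'.2)
    · rintro ⟨s, hs⟩
      obtain ⟨a, has, hak⟩ := hb.pattern_eq_true_iff.1 hs
      exact ⟨⟨a, hak⟩, Subtype.ext (hb.eq_of_mem (hlabel k ⟨a, hak⟩) has)⟩
  refine ⟨fun k => .ofBijective (slot k) (hslot k), ?_⟩
  ext s a
  simp only [mem_slotBlock, Equiv.ofBijective_apply, slot]
  constructor
  · rintro ⟨k, hak, rfl⟩
    exact hlabel k ⟨a, hak⟩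
  · intro has
    obtain ⟨k, hak⟩ :=
      hb.isKPartiteMatching.exists_part_of_mem (mem_image_of_mem b (mem_univ s)) has
    exact ⟨k, hak, hb.eq_of_mem (hlabel k ⟨a, hak⟩) has⟩

theorem overlapTable_image (hb : IsLabelledMatching p V b) (h : ι → Bool) :
    overlapTable V (univ.image b) h = #{s | p s = h} := by
  rw [overlapTable, filter_image, card_image_of_injective _ hb.injective]
  simp only [hb.inclusionPattern_eq]

theorem exists_equiv_image (hb : IsLabelledMatching p V b) :
    ∃ e : σ ≃ univ.image b, ∀ s, (e s : Finset α) = b s := by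
  let e (s : σ) : univ.image b := ⟨b s, mem_image_of_mem b (mem_univ s)⟩
  have he : Function.Bijective e := by
    refine ⟨fun s s' h => hb.injective (congrArg Subtype.val h), fun ⟨m, hm⟩ => ?_⟩
    obtain ⟨s, -, rfl⟩ := mem_image.1 hm
    exact ⟨s, rfl⟩
  exact ⟨.ofBijective e he, fun _ => rfl⟩

end IsLabelledMatching

variable [Fintype σ]

theorem IsKPartiteMatching.isLabelledMatching_coe_equiv (hM : IsKPartiteMatching V M) (e : σ ≃ M)
    (he : ∀ s, inclusionPattern V (e s) = p s) :
    IsLabelledMatching p V fun s => (e s : Finset α) where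
  injective := Subtype.val_injective.comp e.injective
  isKPartiteMatching := by rwa [image_univ_coe_equiv]
  inclusionPattern_eq := he

theorem card_isLabelledMatching (hV : Pairwise (Function.onFun Disjoint V))
    (hp : ∀ s, ∃ k, p s k = true) (hcard : ∀ k, #(V k) = #{s | p s k = true}) :
    Nat.card {b // IsLabelledMatching p V b} = ∏ k, (#(V k))! := by
  classical
  have hbij : Function.Bijective fun slot : ∀ k, V k ≃ {s // p s k = true} =>
      (⟨slotBlock slot, isLabelledMatching_slotBlock hV hp⟩ :
        {b // IsLabelledMatching p V b}) := by
    refine ⟨fun slot slot' h => slotBlock_injective hV (congrArg Subtype.val h), ?_⟩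
    rintro ⟨b, hb⟩
    obtain ⟨slot, rfl⟩ := hb.exists_slotBlock_eq
    exact ⟨slot, rfl⟩
  rw [← Nat.card_eq_of_bijective _ hbij, Nat.card_pi]
  refine prod_congr rfl fun k _ => ?_
  have e : V k ≃ {s // p s k = true} :=
    Fintype.equivOfCardEq (by rw [Fintype.card_coe, Fintype.card_subtype, hcard])
  rw [Nat.card_eq_fintype_card, Fintype.card_equiv e, Fintype.card_coe]

theorem card_filter_coe_inclusionPattern (h : ι → Bool) :
    #{m : M | inclusionPattern V m = h} = overlapTable V M h := by
  rw [overlapTable, card_filter, card_filter,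
    sum_coe_sort M fun m => if inclusionPattern V m = h then 1 else 0]

/-- The `K`-partite matchings whose blocks have the inclusion patterns `p s`, counted with
multiplicity. -/
def matchingsWithPatterns (p : σ → ι → Bool) (V : ι → Finset α) : Set (Finset (Finset α)) :=
  {M | IsKPartiteMatching V M ∧ ∀ h, overlapTable V M h = #{s | p s = h}}

/-- The labellings of the blocks of `M` by slots of the same inclusion pattern. -/
abbrev BlockLabelling (p : σ → ι → Bool) (V : ι → Finset α) (M : Finset (Finset α)) : Type _ :=
  {e : σ ≃ M // ∀ s, inclusionPattern V (e s) = p s}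

theorem nonempty_blockLabelling_equiv_perm (hM : M ∈ matchingsWithPatterns p V) :
    Nonempty (BlockLabelling p V M ≃ {π : Equiv.Perm σ // p ∘ π = p}) :=
  nonempty_fiberPreserving_equiv_perm (g := fun m : M => inclusionPattern V m) fun h => by
    rw [card_filter_coe_inclusionPattern, hM.2]

theorem nonempty_sigma_blockLabelling_equiv :
    Nonempty ((Σ M : matchingsWithPatterns p V, BlockLabelling p V M) ≃
      {b // IsLabelledMatching p V b}) := by
  let blocks (x : Σ M : matchingsWithPatterns p V, BlockLabelling p V M) :
      {b // IsLabelledMatching p V b} :=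
    ⟨fun s => x.2.1 s, x.1.2.1.isLabelledMatching_coe_equiv x.2.1 x.2.2⟩
  refine ⟨.ofBijective blocks ⟨?_, ?_⟩⟩
  · rintro ⟨⟨M, hM⟩, e, he⟩ ⟨⟨M', hM'⟩, e', he'⟩ h
    have hcoe : (fun s => (e s : Finset α)) = fun s => (e' s : Finset α) := congrArg Subtype.val h
    obtain rfl : M = M' :=
      (image_univ_coe_equiv e).symm.trans (hcoe ▸ image_univ_coe_equiv e')
    obtain rfl : e = e' := Equiv.ext fun s => Subtype.ext (congrFun hcoe s)
    rfl
  · rintro ⟨b, hb⟩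
    obtain ⟨e, he⟩ := hb.exists_equiv_image
    exact ⟨⟨⟨univ.image b, hb.isKPartiteMatching, hb.overlapTable_image⟩, e,
      fun s => by rw [he, hb.inclusionPattern_eq]⟩, Subtype.ext (funext he)⟩

variable [DecidableEq ι]

theorem card_isLabelledMatching_eq_ncard_mul_prod :
    Nat.card {b // IsLabelledMatching p V b} =
      (matchingsWithPatterns p V).ncard * ∏ h, (#{s | p s = h})! := by
  have labelling_equiv_perm (M : matchingsWithPatterns p V) :=
    (nonempty_blockLabelling_equiv_perm M.2).some
  rw [← Nat.card_congr nonempty_sigma_blockLabelling_equiv.some,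
    Nat.card_congr (Equiv.sigmaEquivProdOfEquiv labelling_equiv_perm), Nat.card_prod,
    Nat.card_coe_set_eq, card_fiberPreserving_perm]

theorem ncard_matchingsWithPatterns_mul_prod (hV : Pairwise (Function.onFun Disjoint V))
    (hp : ∀ s, ∃ k, p s k = true) (hcard : ∀ k, #(V k) = #{s | p s k = true}) :
    (matchingsWithPatterns p V).ncard * ∏ h, (#{s | p s = h})! = ∏ k, (#(V k))! := by
  rw [← card_isLabelledMatching_eq_ncard_mul_prod, card_isLabelledMatching hV hp hcard]

end KPartite

section Slot

variable {ι : Type*}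

/-- The labels for the blocks of a matching with overlap table `n`: `n h` of them for each
nonzero pattern `h`. -/
abbrev Slot (n : (ι → Bool) → ℕ) : Type _ :=
  Σ h : {h : ι → Bool // h ≠ fun _ => false}, Fin (n h)

variable {n : (ι → Bool) → ℕ}

/-- The inclusion pattern prescribed for the block labelled by a slot. -/
def slotPattern (s : Slot n) : ι → Bool := s.1

theorem exists_slotPattern_eq_true (s : Slot n) : ∃ k, slotPattern s k = true := by
  simpa [slotPattern, funext_iff] using s.1.2

variable [Fintype ι] [DecidableEq ι]

theorem card_filter_slotPattern (P : (ι → Bool) → Prop) [DecidablePred P] :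
    #{s : Slot n | P (slotPattern s)} = ∑ h with h ≠ fun _ => false, if P h then n h else 0 := by
  calc #{s : Slot n | P (slotPattern s)}
      = ∑ h : {h : ι → Bool // h ≠ fun _ => false}, if P h then n h else 0 := by
        rw [card_filter, Fintype.sum_sigma]
        refine sum_congr rfl fun h _ => ?_
        by_cases hP : P h <;> simp [slotPattern, hP]
    _ = ∑ h : ι → Bool with h ≠ fun _ => false, if P h then n h else 0 :=
        (sum_subtype _ (fun _ => mem_filter_univ _) fun h => if P h then n h else 0).symm

theorem card_filter_slotPattern_eq (h : ι → Bool) :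
    #{s : Slot n | slotPattern s = h} = if h ≠ fun _ => false then n h else 0 := by
  rw [card_filter_slotPattern fun h' => h' = h]
  simp

theorem matchingsWithPatterns_slotPattern {α : Type*} [DecidableEq α] {V : ι → Finset α} :
    matchingsWithPatterns (slotPattern (n := n)) V =
      {M | IsKPartiteMatching V M ∧ ∀ h, h ≠ (fun _ => false) → overlapTable V M h = n h} := by
  ext M
  refine and_congr_right fun hM => forall_congr' fun h => ?_
  rw [card_filter_slotPattern_eq]
  by_cases hzero : h = fun _ => false
  · simp [hzero, hM.overlapTable_zero]
  · simp [hzero]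

theorem prod_factorial_card_filter_slotPattern :
    ∏ h, (#{s : Slot n | slotPattern s = h})! = ∏ h with h ≠ fun _ => false, (n h)! := by
  simp only [card_filter_slotPattern_eq, prod_filter, apply_ite Nat.factorial, Nat.factorial_zero]

end Slot

theorem kpartite_matching_count_general {ι α : Type*} [Fintype ι] [DecidableEq ι] [DecidableEq α]
    (n : (ι → Bool) → ℕ) (V : ι → Finset α) (hV : Pairwise (Function.onFun Disjoint V))
    (hcard : ∀ k, #(V k) = ∑ h with h ≠ fun _ => false, if h k then n h else 0) :
    (Set.ncard {M | IsKPartiteMatching V M ∧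
        ∀ h, h ≠ (fun _ => false) → overlapTable V M h = n h} : ℚ) =
      (∏ k, ((#(V k))! : ℚ)) / ∏ h with h ≠ fun _ => false, ((n h)! : ℚ) := by
  have hcard_slots (k : ι) : #(V k) = #{s : Slot n | slotPattern s k = true} := by
    rw [hcard, card_filter_slotPattern fun h => h k = true]
  have hcount := ncard_matchingsWithPatterns_mul_prod hV exists_slotPattern_eq_true hcard_slots
  rw [matchingsWithPatterns_slotPattern, prod_factorial_card_filter_slotPattern] at hcount
  rw [eq_div_iff (prod_ne_zero_iff.2 fun h _ => by exact_mod_cast Nat.factorial_ne_zero _)]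
  exact_mod_cast hcount

/-- (Proposition 1) Let `n : H → ℕ` be an overlap table (where
`H = {0,1}^K \ {0}` is the set of nonzero inclusion patterns), let
`n_k = Σ_{h ∈ H} h_k n_h`, and let `V_1, …, V_K` be pairwise disjoint finite sets with
`|V_k| = n_k`.  Then the number of `K`-partite matchings of `V_1, …, V_K` (partitions of
`V_1 ∪ ⋯ ∪ V_K` whose blocks contain at most one element of each `V_k`) whose overlap
table equals `n` is `(∏_k n_k!) / (∏_{h ∈ H} n_h!)`. -/
theorem kpartite_matching_count {α : Type*} [DecidableEq α] {K : ℕ} (hK : 1 ≤ K)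
    (n : (Fin K → Bool) → ℕ) (V : Fin K → Finset α)
    (hdisj : ∀ k k' : Fin K, k ≠ k' → Disjoint (V k) (V k'))
    (hcard : ∀ k, (V k).card =
      ∑ h ∈ Finset.univ.filter (fun h : Fin K → Bool => h ≠ fun _ => false),
        if h k then n h else 0) :
    (Set.ncard {M : Finset (Finset α) |
        IsPartitionOf (Finset.univ.biUnion V) M ∧
        (∀ m ∈ M, ∀ k, (m ∩ V k).card ≤ 1) ∧
        (∀ h : Fin K → Bool, h ≠ (fun _ => false) →
          (M.filter (fun m => (fun k => decide ((m ∩ V k) ≠ ∅)) = h)).card = n h)} : ℚ) =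
      (∏ k, ((Nat.factorial (V k).card : ℚ))) /
        ∏ h ∈ Finset.univ.filter (fun h : Fin K → Bool => h ≠ fun _ => false),
          ((Nat.factorial (n h) : ℚ)) := by
  have hcount := kpartite_matching_count_general n V (fun k k' => hdisj k k') hcard
  simp only [isKPartiteMatching_iff, and_assoc] at hcount
  exact hcount
end

section
/- Let C be a partition of R containing a singleton block {j} with j ∈ R_k, and containing another block c ≠ {j} with c ∩ R_k ≠ ∅; set d = |c ∩ R_k| and n = |C|. Let C' = (C \ {{j}, c}) ∪ {c ∪ {j}} be the partition obtained by merging {j} into c. Then g(C')/g(C) = [P(n−1)/P(n)] · [(n−1+α₀)/n] · [1/(n_{1_k}(C) − 1 + α_{1_k})] · [(d+1) p_k(d+1)] / [p_k(d) p_k(1)], where 1_k ∈ H is the pattern with k-th entry 1 and all other entries 0. -/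
/-- The inclusion pattern of a block `c`: `h(c)_k = 1` iff `c ∩ R_k ≠ ∅`. -/
def patternOf {α : Type*} [DecidableEq α] {K : ℕ} (R : Fin K → Finset α)
    (c : Finset α) : Fin K → Bool := fun k => decide ((c ∩ R k) ≠ ∅)

/-- `H = {0,1}^K \ {(0,…,0)}`, the set of nonzero inclusion patterns. -/
def Hset (K : ℕ) : Finset (Fin K → Bool) :=
  Finset.univ.filter (fun h => h ≠ fun _ => false)

/-- The inclusion pattern `1_k` with `k`-th entry `1` and all other entries `0`. -/
def onePat {K : ℕ} (k : Fin K) : Fin K → Bool := fun k' => decide (k' = k)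

/-- The structured prior density
`g_R(C) = P(n(C)) · n(C)! · (Γ(α₀)/Γ(n(C)+α₀)) · ∏_{h∈H} Γ(n_h(C)+α_h)/Γ(α_h) ·
∏_k (1/|R_k|!) ∏_{c ∈ C, c ∩ R_k ≠ ∅} |c ∩ R_k|! p_k(|c ∩ R_k|)`. -/
noncomputable def priorDensity {α : Type*} [DecidableEq α] {K : ℕ} (R : Fin K → Finset α)
    (P : ℕ → ℝ) (p : Fin K → ℕ → ℝ) (a : (Fin K → Bool) → ℝ)
    (C : Finset (Finset α)) : ℝ :=
  P C.card * (Nat.factorial C.card : ℝ) *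
    (Real.Gamma (∑ h ∈ Hset K, a h) /
      Real.Gamma ((C.card : ℝ) + ∑ h ∈ Hset K, a h)) *
    (∏ h ∈ Hset K,
      Real.Gamma (((C.filter (fun c => patternOf R c = h)).card : ℝ) + a h) /
        Real.Gamma (a h)) *
    ∏ k, ((1 / (Nat.factorial (R k).card : ℝ)) *
      ∏ c ∈ C.filter (fun c => (c ∩ R k) ≠ ∅),
        ((Nat.factorial (c ∩ R k).card : ℝ) * p k ((c ∩ R k).card)))

/-!
The density is a product of a factor depending only on the number `n` of blocks, a
Dirichlet-multinomial factor in the pattern counts, and one factor per file. Merging `{j}` into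
`c` lowers `n` by one and lowers only the count of `1_k`, the pattern of `{j}`: since `c` already
meets `R_k`, the merged block inherits the pattern of `c`. Hence the recurrence
`Γ (x + 1) = x * Γ x`, used once at `n - 1 + α₀` and once at `n_{1_k} - 1 + α_{1_k}`, evaluates the
first two quotients. The factors of the files other than `R_k` do not see `j`, and in that of `R_k`
the weights of blocks with `d` and `1` records are replaced by the weight of one with `d + 1`.
-/

section Blocks

variable {α M : Type*} [DecidableEq α] [CommMonoid M] {C : Finset (Finset α)} {b c : Finset α}

/-- The family of blocks obtained from `C` by merging the block `b` into the block `c`. The union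
is written as `c ∪ b`, so that for `b = {j}` this unfolds to the paper's
`(C \ {{j}, c}) ∪ {c ∪ {j}}`. -/
def mergeBlocks (C : Finset (Finset α)) (b c : Finset α) : Finset (Finset α) :=
  (C \ {b, c}) ∪ {c ∪ b}

@[to_additive]
theorem prod_eq_mul_mul_prod_sdiff_pair (hb : b ∈ C) (hc : c ∈ C) (hbc : b ≠ c)
    (f : Finset α → M) : ∏ x ∈ C, f x = f b * f c * ∏ x ∈ C \ {b, c}, f x := by
  have hsub : {b, c} ⊆ C := by simp [Finset.insert_subset_iff, hb, hc]
  rw [← Finset.prod_sdiff hsub, Finset.prod_pair hbc, mul_comm]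

@[to_additive]
theorem prod_mergeBlocks (hbcC : c ∪ b ∉ C) (f : Finset α → M) :
    ∏ x ∈ mergeBlocks C b c, f x = f (c ∪ b) * ∏ x ∈ C \ {b, c}, f x := by
  have hdisj : Disjoint (C \ {b, c}) {c ∪ b} := by simp [hbcC]
  rw [mergeBlocks, Finset.prod_union hdisj, Finset.prod_singleton, mul_comm]

theorem card_mergeBlocks (hb : b ∈ C) (hc : c ∈ C) (hbc : b ≠ c) (hbcC : c ∪ b ∉ C) :
    (mergeBlocks C b c).card = C.card - 1 := by
  rw [Finset.card_eq_sum_ones, Finset.card_eq_sum_ones, sum_mergeBlocks hbcC,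
    sum_eq_add_add_sum_sdiff_pair hb hc hbc]
  lia

theorem union_notMem_of_isPartitionOf {S : Finset α} (hC : IsPartitionOf S C) (hb : b ∈ C)
    (hc : c ∈ C) (hbc : b ≠ c) : c ∪ b ∉ C := by
  obtain ⟨hnonempty, hdisj, -⟩ := hC
  intro hunion
  have hunion_eq : c ∪ b = c := by_contra fun hne =>
    (hnonempty c hc).ne_empty <| disjoint_self.mp <|
      (hdisj _ hunion c hc hne).mono_left Finset.subset_union_left
  exact (hnonempty b hb).ne_empty
    ((hdisj b hb c hc hbc).eq_bot_of_le (Finset.union_eq_left.mp hunion_eq))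

end Blocks

section Patterns

theorem mem_iff_eq_of_disjoint {ι α : Type*} {S : ι → Finset α} {i : ι}
    (hdisj : ∀ i', i' ≠ i → Disjoint (S i') (S i)) {x : α} (hx : x ∈ S i) (i' : ι) :
    x ∈ S i' ↔ i' = i :=
  ⟨fun hx' => by_contra fun hne => Finset.disjoint_left.mp (hdisj i' hne) hx' hx,
    fun h => h ▸ hx⟩

variable {α : Type*} [DecidableEq α] {K : ℕ} {R : Fin K → Finset α} {C : Finset (Finset α)}
  {b c : Finset α} {j : α} {k : Fin K}

/-- The number `n_h(C)` of blocks of `C` with inclusion pattern `h`. -/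
def patternCount (R : Fin K → Finset α) (C : Finset (Finset α)) (h : Fin K → Bool) : ℕ :=
  (C.filter (fun c => patternOf R c = h)).card

theorem patternCount_ne_zero (hb : b ∈ C) : patternCount R C (patternOf R b) ≠ 0 :=
  Finset.card_ne_zero_of_mem (Finset.mem_filter.mpr ⟨hb, rfl⟩)

theorem onePat_mem_Hset (k : Fin K) : onePat k ∈ Hset K := by
  have hne : onePat k ≠ fun _ => false := fun h => by simpa [onePat] using congrFun h k
  simp [Hset, hne]

theorem patternOf_singleton (hj : ∀ k', j ∈ R k' ↔ k' = k) : patternOf R {j} = onePat k := by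
  ext k'
  simp [patternOf, onePat, ← Finset.nonempty_iff_ne_empty, Finset.Nonempty, hj]

theorem patternOf_union_singleton (hj : ∀ k', j ∈ R k' → c ∩ R k' ≠ ∅) :
    patternOf R (c ∪ {j}) = patternOf R c := by
  funext k'
  simp only [patternOf, decide_eq_decide, Finset.union_inter_distrib_right]
  by_cases hjk' : j ∈ R k'
  · simp [hj k' hjk', hjk']
  · simp [Finset.singleton_inter_of_notMem hjk']

theorem patternCount_eq_mergeBlocks_add_single (hb : b ∈ C) (hc : c ∈ C) (hbc : b ≠ c)
    (hbcC : c ∪ b ∉ C) (hpattern : patternOf R (c ∪ b) = patternOf R c) :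
    patternCount R C = patternCount R (mergeBlocks C b c) + Pi.single (patternOf R b) 1 := by
  funext h
  simp only [patternCount, Finset.card_filter, Pi.add_apply, Pi.single_apply,
    sum_eq_add_add_sum_sdiff_pair hb hc hbc, sum_mergeBlocks hbcC, hpattern, eq_comm (a := h)]
  ring

end Patterns

section GammaFactors

theorem ne_neg_natCast_of_pos {x : ℝ} (hx : 0 < x) (m : ℕ) : x ≠ -m :=
  ((neg_nonpos.mpr m.cast_nonneg).trans_lt hx).ne'

theorem natCast_add_ne_neg_natCast {x : ℝ} (hx : ∀ m : ℕ, x ≠ -m) (n m : ℕ) :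
    (n : ℝ) + x ≠ -m := fun h => hx (n + m) (by push_cast; linarith)

theorem natCast_sub_one_add_ne_zero {x : ℝ} (hx : ∀ m : ℕ, x ≠ -m) {n : ℕ} (hn : n ≠ 0) :
    (n : ℝ) - 1 + x ≠ 0 := fun h =>
  hx (n - 1) (by rw [Nat.cast_pred (Nat.pos_of_ne_zero hn)]; linarith)

theorem Gamma_natCast_succ_add {x : ℝ} {n : ℕ} (hx : (n : ℝ) + x ≠ 0) :
    Real.Gamma ((n + 1 : ℕ) + x) = (n + x) * Real.Gamma (n + x) := by
  rw [Nat.cast_succ, add_right_comm, Real.Gamma_add_one hx]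

/-- The factor `P(n) n! Γ(s)/Γ(n+s)` that a density contributes through its number `n` of blocks,
where `s` is the total concentration `α₀`. -/
noncomputable def sizeFactor (P : ℕ → ℝ) (s : ℝ) (n : ℕ) : ℝ :=
  P n * (n.factorial : ℝ) * (Real.Gamma s / Real.Gamma (n + s))

theorem sizeFactor_ne_zero {P : ℕ → ℝ} {s : ℝ} {n : ℕ} (hP : P n ≠ 0) (hs : ∀ m : ℕ, s ≠ -m) :
    sizeFactor P s n ≠ 0 :=
  mul_ne_zero (mul_ne_zero hP (Nat.cast_ne_zero.mpr n.factorial_ne_zero))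
    (div_ne_zero (Real.Gamma_ne_zero hs)
      (Real.Gamma_ne_zero (natCast_add_ne_neg_natCast hs n)))

theorem sizeFactor_pred_mul (P : ℕ → ℝ) {s : ℝ} {n : ℕ} (hn : n ≠ 0)
    (hs : (n : ℝ) - 1 + s ≠ 0) :
    sizeFactor P s (n - 1) * (P n * n) = sizeFactor P s n * (P (n - 1) * (n - 1 + s)) := by
  obtain ⟨m, rfl⟩ := Nat.exists_eq_add_one_of_ne_zero hn
  have hcast : ((m + 1 : ℕ) : ℝ) - 1 = m := by rw [Nat.cast_succ, add_sub_cancel_right]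
  rw [hcast] at hs ⊢
  simp only [sizeFactor, Nat.add_sub_cancel, Gamma_natCast_succ_add hs, Nat.factorial_succ,
    Nat.cast_mul]
  field_simp

/-- The Dirichlet-multinomial factor `∏ Γ(νᵢ + aᵢ)/Γ(aᵢ)` of the counts `ν`. -/
noncomputable def dirichletFactor {ι : Type*} (s : Finset ι) (a : ι → ℝ) (ν : ι → ℕ) : ℝ :=
  ∏ i ∈ s, Real.Gamma (ν i + a i) / Real.Gamma (a i)

variable {ι : Type*} {s : Finset ι} {a : ι → ℝ}

theorem dirichletFactor_ne_zero (ha : ∀ i ∈ s, ∀ m : ℕ, a i ≠ -m) (ν : ι → ℕ) :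
    dirichletFactor s a ν ≠ 0 :=
  Finset.prod_ne_zero_iff.mpr fun i hi =>
    div_ne_zero (Real.Gamma_ne_zero (natCast_add_ne_neg_natCast (ha i hi) (ν i)))
      (Real.Gamma_ne_zero (ha i hi))

theorem dirichletFactor_add_single [DecidableEq ι] {ν : ι → ℕ} {i : ι} (hi : i ∈ s)
    (hν : (ν i : ℝ) + a i ≠ 0) :
    dirichletFactor s a (ν + Pi.single i 1) = dirichletFactor s a ν * (ν i + a i) := by
  have hother : ∀ i' ∈ s.erase i,
      Real.Gamma ((ν + Pi.single i 1 : ι → ℕ) i' + a i') / Real.Gamma (a i') =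
        Real.Gamma (ν i' + a i') / Real.Gamma (a i') := fun i' hi' => by
    simp [Finset.ne_of_mem_erase hi']
  simp only [dirichletFactor]
  rw [← Finset.mul_prod_erase s _ hi, Finset.prod_congr rfl hother,
    ← Finset.mul_prod_erase s _ hi, Pi.add_apply, Pi.single_eq_same, Gamma_natCast_succ_add hν]
  ring

end GammaFactors

section FileFactors

variable {α : Type*} [DecidableEq α] {S : Finset α} {q : ℕ → ℝ} {C : Finset (Finset α)}
  {c : Finset α} {j : α}

/-- The weight `|c ∩ S|! q(|c ∩ S|)` that a block `c` contributes to the factor of the file `S`,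
extended by `1` to blocks disjoint from `S`. -/
def fileWeight (S : Finset α) (q : ℕ → ℝ) (c : Finset α) : ℝ :=
  if c ∩ S ≠ ∅ then ((c ∩ S).card.factorial : ℝ) * q (c ∩ S).card else 1

/-- The factor of the density that belongs to the file `S` with cluster size weights `q`. -/
noncomputable def fileFactor (S : Finset α) (q : ℕ → ℝ) (C : Finset (Finset α)) : ℝ :=
  (1 / (S.card.factorial : ℝ)) * ∏ c ∈ C, fileWeight S q c

theorem fileWeight_ne_zero (hq : ∀ m, q m ≠ 0) (c : Finset α) : fileWeight S q c ≠ 0 := by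
  unfold fileWeight
  split_ifs
  · exact mul_ne_zero (Nat.cast_ne_zero.mpr (Nat.factorial_ne_zero _)) (hq _)
  · exact one_ne_zero

theorem fileFactor_ne_zero (hq : ∀ m, q m ≠ 0) (C : Finset (Finset α)) :
    fileFactor S q C ≠ 0 :=
  mul_ne_zero (one_div_ne_zero (Nat.cast_ne_zero.mpr (Nat.factorial_ne_zero _)))
    (Finset.prod_ne_zero_iff.mpr fun c _ => fileWeight_ne_zero hq c)

theorem fileWeight_singleton_of_notMem (hj : j ∉ S) : fileWeight S q {j} = 1 := by
  simp [fileWeight, Finset.singleton_inter_of_notMem hj]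

theorem fileWeight_singleton_of_mem (hj : j ∈ S) : fileWeight S q {j} = q 1 := by
  simp [fileWeight, Finset.singleton_inter_of_mem hj]

theorem fileWeight_union_singleton_of_notMem (hj : j ∉ S) :
    fileWeight S q (c ∪ {j}) = fileWeight S q c := by
  simp only [fileWeight, Finset.union_inter_distrib_right, Finset.singleton_inter_of_notMem hj,
    Finset.union_empty]

theorem fileWeight_of_inter_ne_empty (hc : c ∩ S ≠ ∅) :
    fileWeight S q c = ((c ∩ S).card.factorial : ℝ) * q (c ∩ S).card :=
  if_pos hc

theorem fileWeight_union_singleton_of_mem (hj : j ∈ S) (hjc : j ∉ c) :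
    fileWeight S q (c ∪ {j}) =
      (((c ∩ S).card + 1).factorial : ℝ) * q ((c ∩ S).card + 1) := by
  have hinter : (c ∪ {j}) ∩ S = insert j (c ∩ S) := by
    rw [Finset.union_inter_distrib_right, Finset.singleton_inter_of_mem hj, Finset.union_comm,
      Finset.insert_eq]
  have hj_notMem : j ∉ c ∩ S := fun h => hjc (Finset.mem_of_mem_inter_left h)
  rw [fileWeight_of_inter_ne_empty (hinter ▸ Finset.insert_ne_empty j _), hinter,
    Finset.card_insert_of_notMem hj_notMem]

theorem fileFactor_mergeBlocks_singleton_of_notMem (hjC : {j} ∈ C) (hc : c ∈ C)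
    (hcj : {j} ≠ c) (hcjC : c ∪ {j} ∉ C) (hj : j ∉ S) :
    fileFactor S q (mergeBlocks C {j} c) = fileFactor S q C := by
  rw [fileFactor, fileFactor, prod_mergeBlocks hcjC, prod_eq_mul_mul_prod_sdiff_pair hjC hc hcj,
    fileWeight_union_singleton_of_notMem hj, fileWeight_singleton_of_notMem hj, one_mul]

theorem fileFactor_mergeBlocks_singleton_of_mem (hjC : {j} ∈ C) (hc : c ∈ C)
    (hcjC : c ∪ {j} ∉ C) (hj : j ∈ S) (hjc : j ∉ c) (hcS : c ∩ S ≠ ∅) :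
    fileFactor S q (mergeBlocks C {j} c) * (q (c ∩ S).card * q 1) =
      fileFactor S q C * (((c ∩ S).card + 1) * q ((c ∩ S).card + 1)) := by
  have hcj : {j} ≠ c := ne_of_mem_of_not_mem' (Finset.mem_singleton_self j) hjc
  rw [fileFactor, fileFactor, prod_mergeBlocks hcjC, prod_eq_mul_mul_prod_sdiff_pair hjC hc hcj,
    fileWeight_union_singleton_of_mem hj hjc, fileWeight_singleton_of_mem hj,
    fileWeight_of_inter_ne_empty hcS, Nat.factorial_succ]
  push_cast
  ring

theorem prod_fileFactor_mergeBlocks_singleton {ι : Type*} [Fintype ι]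
    {R : ι → Finset α} {k : ι} (p : ι → ℕ → ℝ) (hj : ∀ k', j ∈ R k' ↔ k' = k)
    (hjC : {j} ∈ C) (hc : c ∈ C) (hjc : j ∉ c) (hcjC : c ∪ {j} ∉ C) (hck : c ∩ R k ≠ ∅) :
    (∏ k', fileFactor (R k') (p k') (mergeBlocks C {j} c)) *
        (p k (c ∩ R k).card * p k 1) =
      (∏ k', fileFactor (R k') (p k') C) *
        (((c ∩ R k).card + 1) * p k ((c ∩ R k).card + 1)) := by
  have hcj : {j} ≠ c := ne_of_mem_of_not_mem' (Finset.mem_singleton_self j) hjc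
  classical
  have hother : ∀ k' ∈ Finset.univ.erase k,
      fileFactor (R k') (p k') (mergeBlocks C {j} c) = fileFactor (R k') (p k') C :=
    fun k' hk' => fileFactor_mergeBlocks_singleton_of_notMem hjC hc hcj hcjC
      ((hj k').not.mpr (Finset.ne_of_mem_erase hk'))
  rw [← Finset.mul_prod_erase _ _ (Finset.mem_univ k), Finset.prod_congr rfl hother,
    mul_right_comm,
    fileFactor_mergeBlocks_singleton_of_mem hjC hc hcjC ((hj k).mpr rfl) hjc hck,
    mul_right_comm,
    Finset.mul_prod_erase _ (fun k' => fileFactor (R k') (p k') C) (Finset.mem_univ k)]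

end FileFactors

section PriorDensity

variable {α : Type*} [DecidableEq α] {K : ℕ} {R : Fin K → Finset α} {P : ℕ → ℝ}
  {p : Fin K → ℕ → ℝ} {a : (Fin K → Bool) → ℝ} {C : Finset (Finset α)} {j : α} {k : Fin K}
  {c : Finset α}

theorem priorDensity_eq_sizeFactor_mul_dirichletFactor_mul_prod_fileFactor
    (R : Fin K → Finset α) (P : ℕ → ℝ) (p : Fin K → ℕ → ℝ) (a : (Fin K → Bool) → ℝ)
    (C : Finset (Finset α)) :
    priorDensity R P p a C =
      sizeFactor P (∑ h ∈ Hset K, a h) C.card *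
        dirichletFactor (Hset K) a (patternCount R C) *
        ∏ k, fileFactor (R k) (p k) C := by
  simp only [priorDensity, sizeFactor, dirichletFactor, patternCount, fileFactor, fileWeight,
    Finset.prod_filter]

theorem priorDensity_ne_zero (hP : P C.card ≠ 0) (hp : ∀ k m, p k m ≠ 0)
    (ha : ∀ h ∈ Hset K, ∀ m : ℕ, a h ≠ -m) (hα₀ : ∀ m : ℕ, ∑ h ∈ Hset K, a h ≠ -m) :
    priorDensity R P p a C ≠ 0 := by
  rw [priorDensity_eq_sizeFactor_mul_dirichletFactor_mul_prod_fileFactor]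
  exact mul_ne_zero (mul_ne_zero (sizeFactor_ne_zero hP hα₀) (dirichletFactor_ne_zero ha _))
    (Finset.prod_ne_zero_iff.mpr fun k _ => fileFactor_ne_zero (hp k) C)

theorem priorDensity_mergeBlocks_singleton_mul (P : ℕ → ℝ) (p : Fin K → ℕ → ℝ)
    (hj : ∀ k', j ∈ R k' ↔ k' = k) (hjC : {j} ∈ C) (hc : c ∈ C) (hjc : j ∉ c)
    (hcjC : c ∪ {j} ∉ C) (hck : c ∩ R k ≠ ∅)
    (ha : (patternCount R C (onePat k) : ℝ) - 1 + a (onePat k) ≠ 0)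
    (hα₀ : (C.card : ℝ) - 1 + ∑ h ∈ Hset K, a h ≠ 0) :
    priorDensity R P p a (mergeBlocks C {j} c) *
        (P C.card * C.card * (patternCount R C (onePat k) - 1 + a (onePat k)) *
          (p k (c ∩ R k).card * p k 1)) =
      priorDensity R P p a C *
        (P (C.card - 1) * (C.card - 1 + ∑ h ∈ Hset K, a h) *
          (((c ∩ R k).card + 1) * p k ((c ∩ R k).card + 1))) := by
  have hcj : {j} ≠ c := ne_of_mem_of_not_mem' (Finset.mem_singleton_self j) hjc
  have hpattern : patternOf R (c ∪ {j}) = patternOf R c :=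
    patternOf_union_singleton fun k' hjk' => (hj k').mp hjk' ▸ hck
  have hcount := patternCount_eq_mergeBlocks_add_single hjC hc hcj hcjC hpattern
  rw [patternOf_singleton hj] at hcount
  have hcount_onePat :
      (patternCount R C (onePat k) : ℝ) - 1 =
        patternCount R (mergeBlocks C {j} c) (onePat k) := by
    simp [hcount]
  have hsize := sizeFactor_pred_mul P (Finset.card_ne_zero_of_mem hc) hα₀
  have hfiles := prod_fileFactor_mergeBlocks_singleton p hj hjC hc hjc hcjC hck
  rw [hcount_onePat] at ha ⊢
  have hdirichlet := dirichletFactor_add_single (onePat_mem_Hset k) ha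
  rw [← hcount] at hdirichlet
  simp only [priorDensity_eq_sizeFactor_mul_dirichletFactor_mul_prod_fileFactor,
    card_mergeBlocks hjC hc hcj hcjC]
  rw [mul_mul_mul_comm, mul_mul_mul_comm (sizeFactor _ _ _), hsize, ← hdirichlet, hfiles]
  ring

theorem prior_ratio_merge_into_sharing_block_general (hP : P C.card ≠ 0)
    (hp : ∀ k m, p k m ≠ 0) (ha : ∀ h ∈ Hset K, ∀ m : ℕ, a h ≠ -m)
    (hα₀ : ∀ m : ℕ, ∑ h ∈ Hset K, a h ≠ -m) (hj : ∀ k', j ∈ R k' ↔ k' = k)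
    (hjC : {j} ∈ C) (hc : c ∈ C) (hjc : j ∉ c) (hcjC : c ∪ {j} ∉ C) (hck : c ∩ R k ≠ ∅) :
    priorDensity R P p a (mergeBlocks C {j} c) / priorDensity R P p a C =
      (P (C.card - 1) / P C.card) *
        (((C.card : ℝ) - 1 + ∑ h ∈ Hset K, a h) / (C.card : ℝ)) *
        (1 / ((patternCount R C (onePat k) : ℝ) - 1 + a (onePat k))) *
        ((((c ∩ R k).card : ℝ) + 1) * p k ((c ∩ R k).card + 1) /
          (p k ((c ∩ R k).card) * p k 1)) := by
  have hcount : patternCount R C (onePat k) ≠ 0 :=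
    patternOf_singleton hj ▸ patternCount_ne_zero hjC
  have hcard : C.card ≠ 0 := Finset.card_ne_zero_of_mem hc
  have ha_count := natCast_sub_one_add_ne_zero (ha _ (onePat_mem_Hset k)) hcount
  have hmul := priorDensity_mergeBlocks_singleton_mul P p hj hjC hc hjc hcjC hck ha_count
    (natCast_sub_one_add_ne_zero hα₀ hcard)
  have hdenom : P C.card * C.card * (patternCount R C (onePat k) - 1 + a (onePat k)) *
      (p k (c ∩ R k).card * p k 1) ≠ 0 :=
    mul_ne_zero (mul_ne_zero (mul_ne_zero hP (Nat.cast_ne_zero.mpr hcard)) ha_count)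
      (mul_ne_zero (hp _ _) (hp _ _))
  rw [div_mul_div_comm, div_mul_div_comm, div_mul_div_comm, mul_one,
    div_eq_div_iff (priorDensity_ne_zero hP hp ha hα₀) hdenom, hmul, mul_comm]

end PriorDensity

/-- Merging a singleton block `{j}` (with `j ∈ R_k`) into another block `c` with
`c ∩ R_k ≠ ∅`: writing `d = |c ∩ R_k|` and `n = |C|`, the ratio of structured prior
densities is `g(C')/g(C) = [P(n-1)/P(n)] · [(n-1+α₀)/n] · [1/(n_{1_k}(C)-1+α_{1_k})] ·
[(d+1) p_k(d+1)]/[p_k(d) p_k(1)]`. -/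
theorem prior_ratio_merge_into_sharing_block {α : Type*} [DecidableEq α] {K : ℕ}
    (hK : 1 ≤ K) (R : Fin K → Finset α)
    (hne : ∀ k, (R k).Nonempty)
    (hdisj : ∀ k k' : Fin K, k ≠ k' → Disjoint (R k) (R k'))
    (P : ℕ → ℝ) (hP : ∀ m, 0 < P m)
    (p : Fin K → ℕ → ℝ) (hp : ∀ k m, 0 < p k m)
    (a : (Fin K → Bool) → ℝ) (ha : ∀ h ∈ Hset K, 0 < a h)
    (C : Finset (Finset α)) (hC : IsPartitionOf (Finset.univ.biUnion R) C)
    (j : α) (k : Fin K) (hj : j ∈ R k) (hjC : {j} ∈ C)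
    (c : Finset α) (hc : c ∈ C) (hcj : c ≠ {j}) (hck : (c ∩ R k) ≠ ∅) :
    priorDensity R P p a ((C \ {{j}, c}) ∪ {c ∪ {j}}) / priorDensity R P p a C =
      (P (C.card - 1) / P C.card) *
        (((C.card : ℝ) - 1 + ∑ h ∈ Hset K, a h) / (C.card : ℝ)) *
        (1 / (((C.filter (fun c' => patternOf R c' = onePat k)).card : ℝ) - 1 +
          a (onePat k))) *
        ((((c ∩ R k).card : ℝ) + 1) * p k ((c ∩ R k).card + 1) /
          (p k ((c ∩ R k).card) * p k 1)) := by
  have hα₀ : 0 < ∑ h ∈ Hset K, a h := Finset.sum_pos ha ⟨onePat k, onePat_mem_Hset k⟩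
  exact prior_ratio_merge_into_sharing_block_general (hP _).ne' (fun k m => (hp k m).ne')
    (fun h hh => ne_neg_natCast_of_pos (ha h hh)) (ne_neg_natCast_of_pos hα₀)
    (mem_iff_eq_of_disjoint (fun k' => hdisj k' k) hj) hjC hc
    (Finset.disjoint_singleton_right.mp (hC.2.1 c hc {j} hjC hcj))
    (union_notMem_of_isPartitionOf hC hjC hc hcj.symm) hck
end
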